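/- arXiv:2009.00503 — 3 statements merged into one kernel-verified Lean document; each statement's English description precedes it below -/
import Mathlib

section
/- Let ν be a probability measure on a measurable space 𝒳, let w : 𝒳 → [0,∞) be measurable, and let μ = ν.withDensity w be a probability measure (so w is the density of μ with respect to ν). Let T : 𝒳 → [0,1]^p be measurable with pushforward T_*ν equal to λ_p, and let Q : [0,1]^p → 𝒳 be measurable with Q(T(x)) = x for ν-almost every x. Then the pushforward T_*μ equals λ_p.withDensity (w ∘ Q); that is, if X has law μ, then U = T(X) has density d(u) = w(Q(u)) with respect to λ_p. (This is the claim of Proposition 1 that the likelihood ratio d(u) = f(Q(u))/g(Q(u)) is the density of the Rosenblatt-transformed vector U = G_R(X).) -/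
open MeasureTheory ProbabilityTheory

/-- The uniform (normalized Lebesgue) probability measure on the unit cube `[0,1]^p`. -/
noncomputable def cubeMeasure (p : ℕ) : Measure (Fin p → ℝ) :=
  Measure.pi fun _ => volume.restrict (Set.Icc (0:ℝ) 1)

/-- **Proposition 1 (first claim).** If `μ = ν.withDensity w` is a probability measure,
`T` pushes `ν` forward to the uniform measure on `[0,1]^p`, and `Q ∘ T = id` `ν`-a.e.,
then `T` pushes `μ` forward to `λ_p.withDensity (w ∘ Q)`: the likelihood ratio
`d(u) = w(Q(u))` is the density of the Rosenblatt-transformed vector `U = T(X)`. -/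
theorem pushforward_withDensity_rosenblatt
    {𝒳 : Type*} [MeasurableSpace 𝒳] (p : ℕ)
    (ν : Measure 𝒳) [IsProbabilityMeasure ν]
    (w : 𝒳 → ENNReal) (hw : Measurable w)
    (μ : Measure 𝒳) (hμ : μ = ν.withDensity w) [IsProbabilityMeasure μ]
    (T : 𝒳 → (Fin p → ℝ)) (hT : Measurable T)
    (hTν : Measure.map T ν = cubeMeasure p)
    (Q : (Fin p → ℝ) → 𝒳) (hQ : Measurable Q)
    (hQT : ∀ᵐ x ∂ν, Q (T x) = x) :
    Measure.map T μ = (cubeMeasure p).withDensity (w ∘ Q) := by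
  subst hμ
  ext s hs
  rw [Measure.map_apply hT hs, withDensity_apply _ (hT hs), withDensity_apply _ hs, ← hTν,
    setLIntegral_map hs (hw.comp hQ) hT]
  refine lintegral_congr_ae (ae_restrict_of_ae ?_)
  filter_upwards [hQT] with x hx
  simp only [Function.comp_apply, hx]
end

section
/- Let ρ be a probability measure on ℝ × ℝ. Let F₁ denote the cumulative distribution function of the first marginal ρ.fst, and assume F₁ is continuous. For a ∈ ℝ let F₂(a,·) denote the conditional cumulative distribution function of the second coordinate given that the first coordinate equals a (Mathlib's condCDF ρ a), and assume that for ρ.fst-almost every a the map x ↦ F₂(a,x) is continuous. Then the pushforward of ρ under the Rosenblatt transform (a,x) ↦ (F₁(a), F₂(a,x)) equals λ_2, the uniform probability measure on [0,1]². (Rosenblatt's theorem in the bivariate case: under the null hypothesis F ≡ G, the transformed vector U = G_R(X) is uniform on the unit square.) -/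
open MeasureTheory ProbabilityTheory

/-- Probability integral transform for continuous Stieltjes functions. -/
theorem map_stieltjes_uniform (F : StieltjesFunction ℝ) (hc : Continuous F)
    (h0 : Filter.Tendsto F Filter.atBot (nhds 0)) (h1 : Filter.Tendsto F Filter.atTop (nhds 1)) :
    Measure.map F F.measure = volume.restrict (Set.Icc (0:ℝ) 1) := by
  have hP : IsProbabilityMeasure F.measure := F.isProbabilityMeasure h0 h1
  have hle : ∀ x, F x ≤ 1 := fun x => F.mono.ge_of_tendsto h1 x
  have hge : ∀ x, 0 ≤ F x := fun x => F.mono.le_of_tendsto h0 x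
  have : IsFiniteMeasure (Measure.map F F.measure) := by infer_instance
  refine Measure.ext_of_Iic _ _ fun t => ?_
  rw [Measure.map_apply hc.measurable measurableSet_Iic, Measure.restrict_apply measurableSet_Iic]
  rcases lt_or_ge t 0 with ht | ht
  · have e1 : F ⁻¹' Set.Iic t = ∅ := by
      ext x
      have := hge x
      simp only [Set.mem_preimage, Set.mem_Iic, Set.mem_empty_iff_false, iff_false]
      linarith
    have e2 : Set.Iic t ∩ Set.Icc (0:ℝ) 1 = ∅ := by
      ext x
      simp only [Set.mem_inter_iff, Set.mem_Iic, Set.mem_Icc, Set.mem_empty_iff_false, iff_false]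
      intro h
      linarith [h.1, h.2.1]
    rw [e1, e2, measure_empty, measure_empty]
  rcases le_or_gt 1 t with ht1 | ht1
  · have e1 : F ⁻¹' Set.Iic t = Set.univ := by
      ext x
      have := hle x
      simp only [Set.mem_preimage, Set.mem_Iic, Set.mem_univ, iff_true]
      linarith
    have e2 : Set.Iic t ∩ Set.Icc (0:ℝ) 1 = Set.Icc 0 1 := by
      rw [Set.inter_eq_right]
      intro x hx
      exact hx.2.trans ht1
    rw [e1, e2, measure_univ]
    simp
  have e2 : Set.Iic t ∩ Set.Icc (0:ℝ) 1 = Set.Icc 0 t := by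
    ext x
    simp only [Set.mem_inter_iff, Set.mem_Iic, Set.mem_Icc]
    constructor
    · rintro ⟨a, b, c⟩; exact ⟨b, a⟩
    · rintro ⟨a, b⟩; exact ⟨b, a, by linarith⟩
  rw [e2, Real.volume_Icc, sub_zero]
  rcases Set.eq_empty_or_nonempty (F ⁻¹' Set.Iic t) with hS | hS
  · have hlt : ∀ x, t ≤ F x := by
      intro x
      by_contra h
      have : x ∈ F ⁻¹' Set.Iic t := (not_le.mp h).le
      rw [hS] at this
      exact this
    have : t ≤ 0 := ge_of_tendsto' h0 hlt
    rw [hS, measure_empty, ENNReal.ofReal_of_nonpos this]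
  · obtain ⟨M, hM⟩ := (h1.eventually (lt_mem_nhds ht1)).exists
    have hb : BddAbove (F ⁻¹' Set.Iic t) := by
      refine ⟨M, fun x hx => ?_⟩
      by_contra h
      have h2 := F.mono (not_le.mp h).le
      have h3 : F x ≤ t := hx
      linarith
    have hcl : IsClosed (F ⁻¹' Set.Iic t) := isClosed_Iic.preimage hc
    have hmem := hcl.csSup_mem hS hb
    set c := sSup (F ⁻¹' Set.Iic t) with hcdef
    have hE : F ⁻¹' Set.Iic t = Set.Iic c := by
      ext x
      constructor
      · intro hx; exact le_csSup hb hx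
      · intro hx; exact (F.mono hx).trans hmem
    have hFc : F c = t := by
      refine le_antisymm hmem ?_
      have hT : Filter.Tendsto F (nhdsWithin c (Set.Ioi c)) (nhds (F c)) :=
        (hc.tendsto c).mono_left nhdsWithin_le_nhds
      refine ge_of_tendsto hT ?_
      filter_upwards [self_mem_nhdsWithin] with x hx
      by_contra h
      have h2 : x ∈ F ⁻¹' Set.Iic t := (not_le.mp h).le
      rw [hE] at h2
      exact (not_lt.mpr (Set.mem_Iic.mp h2)) (Set.mem_Ioi.mp hx)
    rw [hE, F.measure_Iic h0, hFc, sub_zero]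

/-- **Rosenblatt's theorem (bivariate case).** If `ρ` is a probability measure on `ℝ × ℝ`
whose first-marginal cdf `F₁` is continuous and whose conditional cdfs `F₂(a,·) = condCDF ρ a`
are continuous for `ρ.fst`-a.e. `a`, then the pushforward of `ρ` under the Rosenblatt
transform `(a, x) ↦ (F₁ a, condCDF ρ a x)` is the uniform probability measure on `[0,1]²`. -/
theorem rosenblatt_bivariate_uniform
    (ρ : Measure (ℝ × ℝ)) [IsProbabilityMeasure ρ]
    (hF₁ : Continuous (cdf ρ.fst))
    (hF₂ : ∀ᵐ a ∂ρ.fst, Continuous (condCDF ρ a)) :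
    Measure.map (fun z : ℝ × ℝ => (cdf ρ.fst z.1, condCDF ρ z.1 z.2)) ρ =
      (volume.restrict (Set.Icc (0:ℝ) 1)).prod (volume.restrict (Set.Icc (0:ℝ) 1)) := by
  have hfst := map_stieltjes_uniform _ hF₁ (tendsto_cdf_atBot _) (tendsto_cdf_atTop _)
  rw [measure_cdf] at hfst
  let K : Kernel ℝ ℝ := ⟨fun a => (condCDF ρ a).measure, measurable_measure_condCDF ρ⟩
  have hK : ∀ a, K a = (condCDF ρ a).measure := fun a => rfl
  have : IsMarkovKernel K := ⟨fun a => by rw [hK]; infer_instance⟩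
  have hmeas : Measurable (fun z : ℝ × ℝ => condCDF ρ z.1 z.2) := by
    have hs : MeasurableSet {p : (ℝ × ℝ) × ℝ | p.2 ≤ p.1.2} :=
      measurableSet_le measurable_snd (measurable_snd.comp measurable_fst)
    have h := Kernel.measurable_kernel_prodMk_left (κ := K.comap Prod.fst measurable_fst) hs
    have h2 := h.ennreal_toReal
    convert h2 using 2 with z
    have e : (Prod.mk z ⁻¹' {p : (ℝ × ℝ) × ℝ | p.2 ≤ p.1.2}) = Set.Iic z.2 := rfl
    rw [e, Kernel.comap_apply, hK, measure_condCDF_Iic,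
      ENNReal.toReal_ofReal (condCDF_nonneg _ _ _)]
  have hT : Measurable (fun z : ℝ × ℝ => (cdf ρ.fst z.1, condCDF ρ z.1 z.2)) :=
    (hF₁.measurable.comp measurable_fst).prodMk hmeas
  symm
  refine Measure.prod_eq fun s t hs ht => ?_
  rw [Measure.map_apply hT (hs.prod ht)]
  have hdis := lintegral_toKernel_mem (isCondKernelCDF_condCDF ρ) () (hT (hs.prod ht))
  simp only [Kernel.const_apply, IsCondKernelCDF.toKernel_apply] at hdis
  have hs2 : volume.restrict (Set.Icc (0:ℝ) 1) s = ρ.fst (cdf ρ.fst ⁻¹' s) := by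
    rw [← hfst, Measure.map_apply hF₁.measurable hs]
  rw [← hdis, hs2, mul_comm, ← lintegral_indicator_const (hF₁.measurable hs)]
  refine lintegral_congr_ae ?_
  filter_upwards [hF₂] with a ha
  have h2 := map_stieltjes_uniform _ ha (tendsto_condCDF_atBot _ _) (tendsto_condCDF_atTop _ _)
  by_cases hm : cdf ρ.fst a ∈ s
  · rw [Set.indicator_of_mem (by exact hm), ← h2, Measure.map_apply ha.measurable ht]
    congr 1
    ext x
    simp [hm]
  · rw [Set.indicator_of_notMem (by exact hm)]
    convert measure_empty (μ := (condCDF ρ a).measure)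
    ext x
    simp [hm]
end

section
/- Let μ be a purely atomic (discrete) probability measure on ℝ, with countable support S and point masses p(x) = μ({x}) for x ∈ S. Define the mid-distribution function G_mid(x) = μ((−∞, x]) − (1/2)·p(x). Then ∫ G_mid(x) dμ(x) = 1/2 and ∫ (G_mid(x) − 1/2)² dμ(x) = (1 − ∑_{x∈S} p(x)³)/12; that is, if X ~ μ, then G_mid(X) has mean 1/2 and variance (1 − ∑_{x∈S} p(x)³)/12. -/
open MeasureTheory

/-- The sign of `x - y`. -/
noncomputable def sg (x y : ℝ) : ℝ := (if y < x then 1 else 0) - (if x < y then 1 else 0)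

/-- Equality indicator. -/
noncomputable def eqi (x y : ℝ) : ℝ := if x = y then 1 else 0

lemma sg_abs (x y : ℝ) : ‖sg x y‖ ≤ 1 := by
  unfold sg; split_ifs <;> simp

lemma sg_swap (x y : ℝ) : sg y x = - sg x y := by
  unfold sg; ring

@[fun_prop]
lemma sg_meas {α : Type*} [MeasurableSpace α] {f g : α → ℝ} (hf : Measurable f)
    (hg : Measurable g) : Measurable (fun a => sg (f a) (g a)) := by
  unfold sg
  exact (Measurable.ite (measurableSet_lt hg hf) measurable_const measurable_const).sub
    (Measurable.ite (measurableSet_lt hf hg) measurable_const measurable_const)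

@[fun_prop]
lemma eqi_meas {α : Type*} [MeasurableSpace α] {f g : α → ℝ} (hf : Measurable f)
    (hg : Measurable g) : Measurable (fun a => eqi (f a) (g a)) := by
  unfold eqi
  exact Measurable.ite (measurableSet_eq_fun hf hg) measurable_const measurable_const

lemma eqi_abs (x y : ℝ) : ‖eqi x y‖ ≤ 1 := by
  unfold eqi; split_ifs <;> simp

lemma sg_identity (x y z : ℝ) :
    sg x y * sg x z + sg y x * sg y z + sg z x * sg z y = 1 - eqi x y * eqi x z := by
  unfold sg eqi
  rcases lt_trichotomy x y with h | h | h <;> rcases lt_trichotomy x z with h' | h' | h' <;>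
    rcases lt_trichotomy y z with h'' | h'' | h'' <;> grind

lemma int_bd {α : Type*} [MeasurableSpace α] (μ : Measure α) [IsFiniteMeasure μ] {f : α → ℝ}
    (hf : Measurable f) (hb : ∀ a, ‖f a‖ ≤ 1) : Integrable f μ :=
  Integrable.of_bound hf.aestronglyMeasurable 1 (Filter.Eventually.of_forall hb)

lemma integral_bd {α : Type*} [MeasurableSpace α] (μ : Measure α) [IsProbabilityMeasure μ]
    {f : α → ℝ} (hb : ∀ a, ‖f a‖ ≤ 1) : ‖∫ a, f a ∂μ‖ ≤ 1 := by
  simpa using norm_integral_le_of_norm_le_const (μ := μ) (Filter.Eventually.of_forall hb)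

lemma meas_int {α : Type*} [MeasurableSpace α] (μ : Measure ℝ) [IsProbabilityMeasure μ]
    {f : α → ℝ → ℝ} (hf : Measurable (fun q : α × ℝ => f q.1 q.2)) :
    Measurable (fun a => ∫ z, f a z ∂μ) :=
  (StronglyMeasurable.integral_prod_right (ν := μ) (f := f) hf.stronglyMeasurable).measurable

lemma mul_bd {a b : ℝ} (ha : ‖a‖ ≤ 1) (hb : ‖b‖ ≤ 1) : ‖a * b‖ ≤ 1 := by
  rw [norm_mul]; exact mul_le_one₀ ha (norm_nonneg _) hb

lemma swap_bd (μ : Measure ℝ) [IsProbabilityMeasure μ] {f : ℝ → ℝ → ℝ}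
    (hf : Measurable (fun q : ℝ × ℝ => f q.1 q.2)) (hb : ∀ x y, ‖f x y‖ ≤ 1) :
    ∫ x, ∫ y, f x y ∂μ ∂μ = ∫ y, ∫ x, f x y ∂μ ∂μ :=
  integral_integral_swap (int_bd _ hf (fun q => hb q.1 q.2))

lemma sg_int (μ : Measure ℝ) [IsProbabilityMeasure μ] (x : ℝ) :
    ∫ y, sg x y ∂μ = 2 * (μ (Set.Iic x)).toReal - (μ {x}).toReal - 1 := by
  have h : ∀ y, sg x y = 2 * (Set.Iic x).indicator (fun _ => (1:ℝ)) y
      - ({x} : Set ℝ).indicator (fun _ => (1:ℝ)) y - 1 := by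
    intro y
    unfold sg
    simp only [Set.indicator, Set.mem_Iic, Set.mem_singleton_iff]
    rcases lt_trichotomy x y with h | h | h <;> grind
  have i1 : Integrable ((Set.Iic x).indicator (fun _ => (1:ℝ))) μ :=
    (integrable_const _).indicator measurableSet_Iic
  have i2 : Integrable (({x} : Set ℝ).indicator (fun _ => (1:ℝ))) μ :=
    (integrable_const _).indicator (measurableSet_singleton x)
  have i3 : Integrable (fun y => 2 * (Set.Iic x).indicator (fun _ => (1:ℝ)) y
      - ({x} : Set ℝ).indicator (fun _ => (1:ℝ)) y) μ := (i1.const_mul 2).sub i2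
  simp_rw [h]
  rw [integral_sub i3 (integrable_const _),
    integral_sub (i1.const_mul 2) i2, integral_const_mul,
    integral_indicator_const _ measurableSet_Iic,
    integral_indicator_const _ (measurableSet_singleton x)]
  simp [Measure.real]

lemma eqi_int (μ : Measure ℝ) [IsProbabilityMeasure μ] (x : ℝ) :
    ∫ y, eqi x y ∂μ = (μ {x}).toReal := by
  have h : ∀ y, eqi x y = ({x} : Set ℝ).indicator (fun _ => (1:ℝ)) y := by
    intro y
    simp [eqi, Set.indicator, eq_comm]
  simp_rw [h]
  rw [integral_indicator_const _ (measurableSet_singleton x)]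
  simp [Measure.real]

lemma mean_sg (μ : Measure ℝ) [IsProbabilityMeasure μ] :
    ∫ x, ∫ y, sg x y ∂μ ∂μ = 0 := by
  have h := swap_bd μ (f := sg) (by fun_prop) sg_abs
  have h2 : ∫ y, ∫ x, sg x y ∂μ ∂μ = - ∫ x, ∫ y, sg x y ∂μ ∂μ := by
    rw [← integral_neg]
    congr 1; ext y
    rw [← integral_neg]
    congr 1; ext x
    rw [sg_swap]
  linarith

lemma var_sg (μ : Measure ℝ) [IsProbabilityMeasure μ] :
    3 * ∫ x, (∫ y, sg x y ∂μ) ^ 2 ∂μ = 1 - ∫ x, (μ {x}).toReal ^ 2 ∂μ := by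
  set D : ℝ → ℝ := fun x => ∫ y, sg x y ∂μ with hD
  have Dm : Measurable D := meas_int μ (by fun_prop)
  have Db : ∀ x, ‖D x‖ ≤ 1 := fun x => integral_bd μ (sg_abs x)
  set P : ℝ → ℝ := fun x => ∫ y, eqi x y ∂μ with hP
  have Pm : Measurable P := meas_int μ (by fun_prop)
  have Pb : ∀ x, ‖P x‖ ≤ 1 := fun x => integral_bd μ (eqi_abs x)
  have hb3 : ∀ x y z, ‖sg z x * sg z y‖ ≤ 1 := fun x y z => mul_bd (sg_abs _ _) (sg_abs _ _)
  set H : ℝ → ℝ → ℝ := fun x y => ∫ z, sg z x * sg z y ∂μ with hH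
  have Hm : Measurable (fun q : ℝ × ℝ => H q.1 q.2) := meas_int μ (by fun_prop)
  have Hb : ∀ x y, ‖H x y‖ ≤ 1 := fun x y => integral_bd μ (hb3 x y)
  set K : ℝ → ℝ := fun x => ∫ y, sg y x * D y ∂μ with hK
  have Km : Measurable K := meas_int μ (by fun_prop)
  have Kb : ∀ x, ‖K x‖ ≤ 1 := fun x => integral_bd μ (fun y => mul_bd (sg_abs _ _) (Db _))
  -- integrate over z
  have e1 : ∀ x y, sg x y * D x + sg y x * D y + H x y = 1 - eqi x y * P x := by
    intro x y
    simp only [hD, hH, hP]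
    rw [← integral_const_mul, ← integral_const_mul, ← integral_const_mul,
      ← integral_add, ← integral_add]
    · simp_rw [sg_identity]
      rw [integral_sub (integrable_const _)]
      · simp
      · exact int_bd _ (by fun_prop) (fun z => mul_bd (eqi_abs _ _) (eqi_abs _ _))
    · exact (int_bd _ (by fun_prop) (fun z => mul_bd (sg_abs _ _) (sg_abs _ _))).add
        (int_bd _ (by fun_prop) (fun z => mul_bd (sg_abs _ _) (sg_abs _ _)))
    · exact int_bd _ (by fun_prop) (fun z => mul_bd (sg_abs _ _) (sg_abs _ _))
    · exact int_bd _ (by fun_prop) (fun z => mul_bd (sg_abs _ _) (sg_abs _ _))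
    · exact int_bd _ (by fun_prop) (fun z => mul_bd (sg_abs _ _) (sg_abs _ _))
  have hHK : ∀ x, ∫ y, H x y ∂μ = K x := by
    intro x
    simp only [hH, hK, hD]
    rw [swap_bd μ (f := fun y z => sg z x * sg z y) (by fun_prop) (fun y z => hb3 x y z)]
    simp_rw [integral_const_mul]
  have e2 : ∀ x, D x ^ 2 + K x + K x = 1 - P x ^ 2 := by
    intro x
    have i1 : Integrable (fun y => sg x y * D x) μ :=
      int_bd _ (by fun_prop) (fun z => mul_bd (sg_abs _ _) (Db _))
    have i2 : Integrable (fun y => sg y x * D y) μ :=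
      int_bd _ (by fun_prop) (fun z => mul_bd (sg_abs _ _) (Db _))
    have i3 : Integrable (fun y => H x y) μ :=
      int_bd _ (Hm.comp (measurable_const.prodMk measurable_id)) (fun z => Hb _ _)
    have i4 : Integrable (fun y => eqi x y * P x) μ :=
      int_bd _ (by fun_prop) (fun z => mul_bd (eqi_abs _ _) (Pb _))
    have i12 : Integrable (fun y => sg x y * D x + sg y x * D y) μ := i1.add i2
    have h : ∫ y, (sg x y * D x + sg y x * D y + H x y) ∂μ = ∫ y, (1 - eqi x y * P x) ∂μ :=
      congrArg (fun f : ℝ → ℝ => ∫ y, f y ∂μ) (funext (e1 x))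
    rw [integral_add i12 i3, integral_add i1 i2, integral_sub (integrable_const _) i4,
      hHK, integral_mul_const, integral_mul_const] at h
    change D x * D x + K x + K x = _ - P x * P x at h
    simp at h
    linarith
  have hKD : ∫ x, K x ∂μ = ∫ x, D x ^ 2 ∂μ := by
    simp only [hK]
    rw [swap_bd μ (f := fun x y => sg y x * D y) (by fun_prop)
      (fun y z => mul_bd (sg_abs _ _) (Db _))]
    simp_rw [integral_mul_const]
    congr 1; ext y
    exact (sq (D y)).symm
  have i1 : Integrable (fun y => D y ^ 2) μ :=
    int_bd _ (by fun_prop) (fun z => by rw [sq]; exact mul_bd (Db _) (Db _))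
  have i2 : Integrable (fun y => P y ^ 2) μ :=
    int_bd _ (by fun_prop) (fun z => by rw [sq]; exact mul_bd (Pb _) (Pb _))
  have i3 : Integrable K μ := int_bd _ Km Kb
  have i13 : Integrable (fun y => D y ^ 2 + K y) μ := i1.add i3
  have h : ∫ x, (D x ^ 2 + K x + K x) ∂μ = ∫ x, (1 - P x ^ 2) ∂μ :=
    congrArg (fun f : ℝ → ℝ => ∫ y, f y ∂μ) (funext e2)
  rw [integral_add i13 i3, integral_add i1 i3, integral_sub (integrable_const _) i2,
    hKD] at h
  have hPP : ∀ x, (μ {x}).toReal = P x := fun x => (eqi_int μ x).symm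
  simp_rw [hPP]
  simp at h
  linarith

theorem midDistribution_mean_variance
    (μ : Measure ℝ) [IsProbabilityMeasure μ]
    (S : Set ℝ) (hS : S.Countable) (hSsupp : μ Sᶜ = 0)
    (pm : ℝ → ℝ) (hpm : ∀ x, pm x = (μ {x}).toReal)
    (Gmid : ℝ → ℝ)
    (hGmid : ∀ x, Gmid x = (μ (Set.Iic x)).toReal - (1 / 2) * pm x) :
    (∫ x, Gmid x ∂μ = 1 / 2) ∧
    (∫ x, (Gmid x - 1 / 2) ^ 2 ∂μ = (1 - ∑' x : S, (pm x) ^ 3) / 12) := by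
  have hG : ∀ x, Gmid x = (1 / 2) * (∫ y, sg x y ∂μ) + 1 / 2 := by
    intro x
    rw [hGmid, hpm, sg_int]; ring
  have Dm : Measurable (fun x => ∫ y, sg x y ∂μ) := meas_int μ (by fun_prop)
  have Db : ∀ x, ‖∫ y, sg x y ∂μ‖ ≤ 1 := fun x => integral_bd μ (sg_abs x)
  have Di := int_bd μ Dm Db
  constructor
  · simp_rw [hG]
    rw [integral_add (Di.const_mul _) (integrable_const _), integral_const_mul, mean_sg]
    simp
  · have h1 : ∀ x, (Gmid x - 1 / 2) ^ 2 = (1 / 4) * (∫ y, sg x y ∂μ) ^ 2 := by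
      intro x; rw [hG]; ring
    simp_rw [h1]
    rw [integral_const_mul]
    have h2 : ∫ x, (μ {x}).toReal ^ 2 ∂μ = ∑' x : S, (pm x) ^ 3 := by
      have hr : μ.restrict S = μ := Measure.restrict_eq_self_of_ae_mem hSsupp
      have Pm : Measurable (fun x => ∫ y, eqi x y ∂μ) := meas_int μ (by fun_prop)
      have Pi : Integrable (fun x => (μ {x}).toReal ^ 2) μ := by
        simp_rw [← eqi_int]
        exact int_bd _ (by fun_prop) (fun z => by
          rw [sq]; exact mul_bd (integral_bd μ (eqi_abs z)) (integral_bd μ (eqi_abs z)))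
      have h3 := setIntegral_countable (μ := μ) (fun x => (μ {x}).toReal ^ 2) hS Pi.integrableOn
      rw [hr] at h3
      rw [h3]
      congr 1; ext x
      simp [hpm, Measure.real]; ring
    have h4 := var_sg μ
    rw [h2] at h4
    linarith
end
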